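/- arXiv:2211.00726 — 6 statements merged into one kernel-verified Lean document; each statement's English description precedes it below -/
import Mathlib

section
/- Let B₋, B₊ be nonzero real numbers and B ∈ 𝔖(B₋, B₊), and define A₂ : ℝ → ℝ by A₂(x) = x·B(x). Then the function (x, ξ, ζ) ↦ √(1 + ξ² + (ζ − A₂(x))²) is an order function on ℝ³: there exist constants C > 0 and N > 0 such that for all (x₁, ξ₁, ζ₁), (x₂, ξ₂, ζ₂) ∈ ℝ³ one has √(1 + ξ₁² + (ζ₁ − A₂(x₁))²) ≤ C · (1 + (x₂ − x₁)² + (ξ₂ − ξ₁)² + (ζ₂ − ζ₁)²)^(N/2) · √(1 + ξ₂² + (ζ₂ − A₂(x₂))²). -/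
/-- A switch function: smooth, equal to `c` near `-∞` and to `d` near `+∞`. -/
def IsSwitch (c d : ℝ) (f : ℝ → ℝ) : Prop :=
  ContDiff ℝ (⊤ : ℕ∞) f ∧ ∃ α β : ℝ, α < β ∧ (∀ x ≤ α, f x = c) ∧ (∀ x, β ≤ x → f x = d)

/-!
The function in question is the Japanese bracket `⟨v⟩ = √(1 + ‖v‖²)` evaluated at the shifted
momentum `v - A x`, where `v = (ξ, ζ)` and `A x = (0, A₂ x)`. Peetre's inequality
`⟨v⟩² ≤ 2 ⟨v - w⟩² ⟨w⟩²` reduces the claim to a bound on the increments of `A`, and it is enough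
that `A` is Lipschitz up to a bounded error. This holds for `A₂`, which differs from the
piecewise linear function `x ↦ B₋ min(x, 0) + B₊ max(x, 0)` by a continuous function of compact
support.
-/

open Filter

section Peetre

variable {E : Type*} [SeminormedAddCommGroup E]

theorem norm_add_sq_le_two_mul (v w : E) : ‖v + w‖ ^ 2 ≤ 2 * (‖v‖ ^ 2 + ‖w‖ ^ 2) :=
  (pow_le_pow_left₀ (norm_nonneg _) (norm_add_le v w) 2).trans add_sq_le

theorem one_add_norm_sq_le_peetre (v w : E) :
    1 + ‖v‖ ^ 2 ≤ 2 * (1 + ‖v - w‖ ^ 2) * (1 + ‖w‖ ^ 2) := by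
  have hv : ‖v‖ ^ 2 ≤ 2 * (‖v - w‖ ^ 2 + ‖w‖ ^ 2) := by
    simpa only [sub_add_cancel] using norm_add_sq_le_two_mul (v - w) w
  have hprod : 0 ≤ ‖v - w‖ ^ 2 * ‖w‖ ^ 2 := by positivity
  linarith

end Peetre

/-- Coarsely (or large-scale) Lipschitz maps: Lipschitz up to a bounded error. A single constant
bounds both the slope and the error; it is automatically nonnegative unless `X` is empty. -/
def IsCoarselyLipschitz {X Y : Type*} [PseudoMetricSpace X] [PseudoMetricSpace Y]
    (f : X → Y) : Prop :=
  ∃ K : ℝ, ∀ x y, dist (f x) (f y) ≤ K * (1 + dist x y)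

namespace IsCoarselyLipschitz

variable {X Y Z E : Type*} [PseudoMetricSpace X] [PseudoMetricSpace Y] [PseudoMetricSpace Z]
  [SeminormedAddCommGroup E]

theorem of_lipschitzWith {K : NNReal} {f : X → Y} (hf : LipschitzWith K f) :
    IsCoarselyLipschitz f :=
  ⟨K, fun x y => (hf.dist_le_mul x y).trans (by gcongr; exact le_add_of_nonneg_left zero_le_one)⟩

theorem of_norm_le {f : X → E} {R : ℝ} (hf : ∀ x, ‖f x‖ ≤ R) : IsCoarselyLipschitz f := by
  refine ⟨R + R, fun x y => ?_⟩
  have hR : 0 ≤ R := (norm_nonneg _).trans (hf x)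
  calc dist (f x) (f y) ≤ ‖f x‖ + ‖f y‖ := dist_le_norm_add_norm _ _
    _ ≤ R + R := add_le_add (hf x) (hf y)
    _ ≤ (R + R) * (1 + dist x y) :=
      le_mul_of_one_le_right (by positivity) (le_add_of_nonneg_right dist_nonneg)

theorem add {f g : X → E} (hf : IsCoarselyLipschitz f) (hg : IsCoarselyLipschitz g) :
    IsCoarselyLipschitz (f + g) := by
  obtain ⟨K, hK⟩ := hf
  obtain ⟨L, hL⟩ := hg
  refine ⟨K + L, fun x y => ?_⟩
  calc dist (f x + g x) (f y + g y) ≤ dist (f x) (f y) + dist (g x) (g y) :=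
        dist_add_add_le _ _ _ _
    _ ≤ K * (1 + dist x y) + L * (1 + dist x y) := add_le_add (hK x y) (hL x y)
    _ = (K + L) * (1 + dist x y) := (add_mul _ _ _).symm

theorem isometry_comp {g : Y → Z} {f : X → Y} (hg : Isometry g) (hf : IsCoarselyLipschitz f) :
    IsCoarselyLipschitz (g ∘ f) := by
  simpa only [IsCoarselyLipschitz, Function.comp_apply, hg.dist_eq] using hf

theorem exists_dist_sq_le {f : X → Y} (hf : IsCoarselyLipschitz f) :
    ∃ M : ℝ, 0 ≤ M ∧ ∀ x y, dist (f x) (f y) ^ 2 ≤ M * (1 + dist x y ^ 2) := by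
  obtain ⟨K, hK⟩ := hf
  refine ⟨2 * K ^ 2, by positivity, fun x y => ?_⟩
  calc dist (f x) (f y) ^ 2 ≤ (K * (1 + dist x y)) ^ 2 :=
        pow_le_pow_left₀ dist_nonneg (hK x y) 2
    _ = K ^ 2 * (1 + dist x y) ^ 2 := mul_pow _ _ _
    _ ≤ K ^ 2 * (2 * (1 ^ 2 + dist x y ^ 2)) := by gcongr; exact add_sq_le
    _ = 2 * K ^ 2 * (1 + dist x y ^ 2) := by ring

end IsCoarselyLipschitz

section AsymptoticallyLinear

variable {E : Type*} [NormedAddCommGroup E]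

theorem exists_norm_le_of_continuous_of_eventually_eq_zero {f : ℝ → E} (hf : Continuous f)
    (hbot : ∀ᶠ x in atBot, f x = 0) (htop : ∀ᶠ x in atTop, f x = 0) :
    ∃ R : ℝ, ∀ x, ‖f x‖ ≤ R := by
  refine hf.bounded_above_of_compact_support ?_
  rw [hasCompactSupport_iff_eventuallyEq, coclosedCompact_eq_cocompact, cocompact_eq_atBot_atTop]
  exact eventually_sup.2 ⟨hbot, htop⟩

variable [NormedSpace ℝ E]

theorem isCoarselyLipschitz_min_smul_add_max_smul (c d : E) :
    IsCoarselyLipschitz fun x : ℝ => min x 0 • c + max x 0 • d := by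
  have lipschitz_smul (e : E) := (ContinuousLinearMap.toSpanSingleton ℝ e).lipschitz
  exact .of_lipschitzWith <| ((lipschitz_smul c).comp (LipschitzWith.id.min_const 0)).add
    ((lipschitz_smul d).comp (LipschitzWith.id.max_const 0))

theorem isCoarselyLipschitz_of_eventually_eq_smul {f : ℝ → E} {c d : E} (hf : Continuous f)
    (hbot : ∀ᶠ x in atBot, f x = x • c) (htop : ∀ᶠ x in atTop, f x = x • d) :
    IsCoarselyLipschitz f := by
  let g : ℝ → E := fun x => min x 0 • c + max x 0 • d
  have hg : Continuous g := by fun_prop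
  have sub_eq_zero_bot : ∀ᶠ x in atBot, (f - g) x = 0 := by
    filter_upwards [hbot, eventually_le_atBot 0] with x hx hx0
    simp [g, hx, hx0]
  have sub_eq_zero_top : ∀ᶠ x in atTop, (f - g) x = 0 := by
    filter_upwards [htop, eventually_ge_atTop 0] with x hx hx0
    simp [g, hx, hx0]
  obtain ⟨R, hR⟩ := exists_norm_le_of_continuous_of_eventually_eq_zero (hf.sub hg)
    sub_eq_zero_bot sub_eq_zero_top
  exact sub_add_cancel f g ▸
    (IsCoarselyLipschitz.of_norm_le hR).add (isCoarselyLipschitz_min_smul_add_max_smul c d)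

end AsymptoticallyLinear

theorem IsSwitch.isCoarselyLipschitz_id_mul {c d : ℝ} {B : ℝ → ℝ} (hB : IsSwitch c d B) :
    IsCoarselyLipschitz fun x => x * B x := by
  obtain ⟨hsmooth, α, β, -, hα, hβ⟩ := hB
  refine isCoarselyLipschitz_of_eventually_eq_smul (c := c) (d := d)
    (continuous_id.mul hsmooth.continuous) ?_ ?_
  · filter_upwards [eventually_le_atBot α] with x hx
    rw [hα x hx, smul_eq_mul]
  · filter_upwards [eventually_ge_atTop β] with x hx
    rw [hβ x hx, smul_eq_mul]

section OrderFunction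

variable {X E : Type*} [PseudoMetricSpace X] [SeminormedAddCommGroup E]

theorem IsCoarselyLipschitz.exists_one_add_norm_sub_sq_le {A : X → E}
    (hA : IsCoarselyLipschitz A) :
    ∃ C : ℝ, 0 < C ∧ ∀ (x₁ : X) (v₁ : E) (x₂ : X) (v₂ : E),
      1 + ‖v₁ - A x₁‖ ^ 2 ≤
        C * (1 + dist x₂ x₁ ^ 2 + ‖v₂ - v₁‖ ^ 2) * (1 + ‖v₂ - A x₂‖ ^ 2) := by
  obtain ⟨M, hM, hAM⟩ := hA.exists_dist_sq_le
  refine ⟨2 * (2 + 2 * M), by positivity, fun x₁ v₁ x₂ v₂ => ?_⟩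
  have increment_le : ‖(v₁ - A x₁) - (v₂ - A x₂)‖ ^ 2 ≤
      2 * (‖v₂ - v₁‖ ^ 2 + M * (1 + dist x₂ x₁ ^ 2)) := by
    calc ‖(v₁ - A x₁) - (v₂ - A x₂)‖ ^ 2 = ‖(v₁ - v₂) + (A x₂ - A x₁)‖ ^ 2 := by
          congr 2; abel
      _ ≤ 2 * (‖v₁ - v₂‖ ^ 2 + ‖A x₂ - A x₁‖ ^ 2) := norm_add_sq_le_two_mul _ _
      _ ≤ 2 * (‖v₂ - v₁‖ ^ 2 + M * (1 + dist x₂ x₁ ^ 2)) := by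
          rw [norm_sub_rev v₁ v₂, ← dist_eq_norm (A x₂)]
          gcongr
          exact hAM x₂ x₁
  have one_add_increment_le : 1 + ‖(v₁ - A x₁) - (v₂ - A x₂)‖ ^ 2 ≤
      (2 + 2 * M) * (1 + dist x₂ x₁ ^ 2 + ‖v₂ - v₁‖ ^ 2) := by
    have hMv : 0 ≤ M * ‖v₂ - v₁‖ ^ 2 := by positivity
    linarith [sq_nonneg (dist x₂ x₁)]
  calc 1 + ‖v₁ - A x₁‖ ^ 2
      ≤ 2 * (1 + ‖(v₁ - A x₁) - (v₂ - A x₂)‖ ^ 2) * (1 + ‖v₂ - A x₂‖ ^ 2) :=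
        one_add_norm_sq_le_peetre _ _
    _ ≤ 2 * ((2 + 2 * M) * (1 + dist x₂ x₁ ^ 2 + ‖v₂ - v₁‖ ^ 2)) * (1 + ‖v₂ - A x₂‖ ^ 2) := by
        gcongr
    _ = 2 * (2 + 2 * M) * (1 + dist x₂ x₁ ^ 2 + ‖v₂ - v₁‖ ^ 2) * (1 + ‖v₂ - A x₂‖ ^ 2) := by
        ring

theorem order_function_general {A : X → E} (hA : IsCoarselyLipschitz A) :
    ∃ C N : ℝ, 0 < C ∧ 0 < N ∧ ∀ (x₁ : X) (v₁ : E) (x₂ : X) (v₂ : E),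
      Real.sqrt (1 + ‖v₁ - A x₁‖ ^ 2) ≤
        C * (1 + dist x₂ x₁ ^ 2 + ‖v₂ - v₁‖ ^ 2) ^ (N / 2) *
          Real.sqrt (1 + ‖v₂ - A x₂‖ ^ 2) := by
  obtain ⟨C, hC, hbound⟩ := hA.exists_one_add_norm_sub_sq_le
  refine ⟨Real.sqrt C, 1, Real.sqrt_pos.2 hC, one_pos, fun x₁ v₁ x₂ v₂ => ?_⟩
  rw [← Real.sqrt_eq_rpow, ← Real.sqrt_mul hC.le, ← Real.sqrt_mul (by positivity)]
  exact Real.sqrt_le_sqrt (hbound x₁ v₁ x₂ v₂)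

end OrderFunction

/-- `√(1 + ξ² + (ζ − A₂(x))²)` is an order function on `ℝ³`. -/
theorem order_function (Bm Bp : ℝ) (hBm : Bm ≠ 0) (hBp : Bp ≠ 0)
    (B : ℝ → ℝ) (hB : IsSwitch Bm Bp B)
    (A₂ : ℝ → ℝ) (hA₂ : ∀ x, A₂ x = x * B x) :
    ∃ C N : ℝ, 0 < C ∧ 0 < N ∧
      ∀ x₁ ξ₁ ζ₁ x₂ ξ₂ ζ₂ : ℝ,
        Real.sqrt (1 + ξ₁ ^ 2 + (ζ₁ - A₂ x₁) ^ 2) ≤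
          C * (1 + (x₂ - x₁) ^ 2 + (ξ₂ - ξ₁) ^ 2 + (ζ₂ - ζ₁) ^ 2) ^ (N / 2) *
            Real.sqrt (1 + ξ₂ ^ 2 + (ζ₂ - A₂ x₂) ^ 2) := by
  have hA : IsCoarselyLipschitz A₂ := funext hA₂ ▸ hB.isCoarselyLipschitz_id_mul
  have isometry_inr : Isometry fun a : ℝ => WithLp.toLp 2 ((0 : ℝ), a) :=
    Isometry.of_dist_eq (WithLp.dist_toLp_snd 2 ℝ ℝ)
  obtain ⟨C, N, hC, hN, hbound⟩ := order_function_general (hA.isometry_comp isometry_inr)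
  refine ⟨C, N, hC, hN, fun x₁ ξ₁ ζ₁ x₂ ξ₂ ζ₂ => ?_⟩
  simpa [WithLp.prod_norm_sq_eq_of_L2, Real.dist_eq, ← add_assoc] using
    hbound x₁ (WithLp.toLp 2 (ξ₁, ζ₁)) x₂ (WithLp.toLp 2 (ξ₂, ζ₂))
end

section
/- Let B₋, B₊ be real numbers and B ∈ 𝔖(B₋, B₊). Then there exist positive constants C₁ and C₂ such that for all x₁, x₂ ∈ ℝ, x₁² · (B(x₂) − B(x₁))² ≤ C₁ · (x₂ − x₁)² + C₂. -/
/-!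
If `f` is constant near each end of the line, then `f x₁ ≠ f x₂` prevents `x₁` and `x₂` from lying
far out on the same side, so `|x₁| ≤ |x₂ - x₁| + R` for some fixed `R`. Squaring this and
multiplying by the squared diameter of the range of `f` gives the estimate.
-/

open Asymptotics Filter Set

theorem eventuallyConst_atBot_and_atTop_iff {X E : Type*} [Lattice X] [Nonempty X] {f : X → E} :
    EventuallyConst f atBot ∧ EventuallyConst f atTop ↔
      ∃ α β c d, (∀ x ≤ α, f x = c) ∧ ∀ x, β ≤ x → f x = d := by
  have : Nonempty E := .map f ‹_›
  simp only [eventuallyConst_iff_exists_eventuallyEq, EventuallyEq, eventually_atBot,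
    eventually_atTop]
  constructor
  · rintro ⟨⟨c, α, eq_left⟩, d, β, eq_right⟩
    exact ⟨α, β, c, d, eq_left, eq_right⟩
  · rintro ⟨α, β, c, d, eq_left, eq_right⟩
    exact ⟨⟨c, α, eq_left⟩, d, β, eq_right⟩

theorem norm_sq_mul_dist_sq_le {V E : Type*} [SeminormedAddCommGroup V] [PseudoMetricSpace E]
    {f : V → E} {D R : ℝ} {x y : V} (dist_le : dist (f y) (f x) ≤ D)
    (eq_of_far : ‖y - x‖ + R < ‖x‖ → f y = f x) :
    ‖x‖ ^ 2 * dist (f y) (f x) ^ 2 ≤ 2 * D ^ 2 * ‖y - x‖ ^ 2 + 2 * D ^ 2 * R ^ 2 := by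
  rcases lt_or_ge (‖y - x‖ + R) ‖x‖ with far | near
  · rw [eq_of_far far, dist_self, zero_pow two_ne_zero, mul_zero]
    positivity
  · calc ‖x‖ ^ 2 * dist (f y) (f x) ^ 2
      _ ≤ (‖y - x‖ + R) ^ 2 * D ^ 2 := by gcongr
      _ ≤ 2 * (‖y - x‖ ^ 2 + R ^ 2) * D ^ 2 := by gcongr; exact add_sq_le
      _ = 2 * D ^ 2 * ‖y - x‖ ^ 2 + 2 * D ^ 2 * R ^ 2 := by ring

theorem exists_forall_abs_sub_add_lt_abs_imp_eq {K E : Type*} [CommRing K] [LinearOrder K]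
    [IsStrictOrderedRing K] {f : K → E} (const_atBot : EventuallyConst f atBot)
    (const_atTop : EventuallyConst f atTop) :
    ∃ R, ∀ x y, |y - x| + R < |x| → f y = f x := by
  obtain ⟨α, β, c, d, eq_left, eq_right⟩ :=
    eventuallyConst_atBot_and_atTop_iff.mp ⟨const_atBot, const_atTop⟩
  refine ⟨max (-α) β, fun x y far ↦ ?_⟩
  have le_R_left : -α ≤ max (-α) β := le_max_left _ _
  have le_R_right : β ≤ max (-α) β := le_max_right _ _
  have le_dist : y - x ≤ |y - x| := le_abs_self _
  have neg_dist_le : -|y - x| ≤ y - x := neg_abs_le _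
  rcases lt_max_iff.mp (far : _ < max x (-x)) with right | left
  · rw [eq_right x (by linarith), eq_right y (by linarith)]
  · rw [eq_left x (by linarith), eq_left y (by linarith)]

theorem isBigO_one_of_eventuallyConst {X E : Type*} [SeminormedAddCommGroup E] {f : X → E}
    {l : Filter X} (const_f : EventuallyConst f l) : f =O[l] (1 : X → ℝ) := by
  obtain ⟨c, eq_c⟩ := eventuallyConst_iff_exists_eventuallyEq.mp const_f
  exact eq_c.trans_isBigO (isBigO_const_const c one_ne_zero l)

theorem switch_difference_bound_general {E : Type*} [PseudoMetricSpace E] {f : ℝ → E}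
    (bounded : Bornology.IsBounded (range f)) (const_atBot : EventuallyConst f atBot)
    (const_atTop : EventuallyConst f atTop) :
    ∃ C₁ C₂ : ℝ, 0 < C₁ ∧ 0 < C₂ ∧
      ∀ x₁ x₂ : ℝ, x₁ ^ 2 * dist (f x₂) (f x₁) ^ 2 ≤ C₁ * (x₂ - x₁) ^ 2 + C₂ := by
  obtain ⟨D, dist_le⟩ := Metric.isBounded_range_iff.mp bounded
  obtain ⟨R, eq_of_far⟩ := exists_forall_abs_sub_add_lt_abs_imp_eq const_atBot const_atTop
  refine ⟨2 * D ^ 2 + 1, 2 * D ^ 2 * R ^ 2 + 1, by positivity, by positivity, fun x₁ x₂ ↦ ?_⟩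
  calc x₁ ^ 2 * dist (f x₂) (f x₁) ^ 2
    _ ≤ 2 * D ^ 2 * (x₂ - x₁) ^ 2 + 2 * D ^ 2 * R ^ 2 := by
      simpa only [Real.norm_eq_abs, sq_abs] using
        norm_sq_mul_dist_sq_le (dist_le x₂ x₁) (eq_of_far x₁ x₂)
    _ ≤ (2 * D ^ 2 + 1) * (x₂ - x₁) ^ 2 + (2 * D ^ 2 * R ^ 2 + 1) := by
      gcongr <;> exact le_add_of_nonneg_right zero_le_one

namespace IsSwitch

variable {c d : ℝ} {f : ℝ → ℝ}

theorem eventuallyConst_atBot_and_atTop (hf : IsSwitch c d f) :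
    EventuallyConst f atBot ∧ EventuallyConst f atTop := by
  obtain ⟨-, α, β, -, eq_left, eq_right⟩ := hf
  exact eventuallyConst_atBot_and_atTop_iff.mpr ⟨α, β, c, d, eq_left, eq_right⟩

theorem isBounded_range (hf : IsSwitch c d f) : Bornology.IsBounded (range f) :=
  hf.1.continuous.isBounded_range_iff_isBigO_atTop_atBot.mpr
    ⟨isBigO_one_of_eventuallyConst hf.eventuallyConst_atBot_and_atTop.2,
      isBigO_one_of_eventuallyConst hf.eventuallyConst_atBot_and_atTop.1⟩

end IsSwitch

/-- For a switch function `B`, `x₁²(B(x₂) − B(x₁))² ≤ C₁(x₂ − x₁)² + C₂`. -/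
theorem switch_difference_bound (Bm Bp : ℝ) (B : ℝ → ℝ) (hB : IsSwitch Bm Bp B) :
    ∃ C₁ C₂ : ℝ, 0 < C₁ ∧ 0 < C₂ ∧
      ∀ x₁ x₂ : ℝ, x₁ ^ 2 * (B x₂ - B x₁) ^ 2 ≤ C₁ * (x₂ - x₁) ^ 2 + C₂ := by
  simpa only [Real.dist_eq, sq_abs] using switch_difference_bound_general hB.isBounded_range
    hB.eventuallyConst_atBot_and_atTop.1 hB.eventuallyConst_atBot_and_atTop.2
end

section
/- Let A₂, m, V : ℝ → ℝ be functions, ζ, μ ∈ ℝ, and suppose the pairs (ψ₁, ψ₂) and (φ₁, φ₂) of differentiable functions ℝ → ℂ both solve the Dirac eigenvalue system with data A₂, m, V, ζ and the same eigenvalue μ. If ψ₁(x), ψ₂(x), φ₁(x), φ₂(x) all tend to 0 as x → +∞, then ψ₁(x)·φ₂(x) − ψ₂(x)·φ₁(x) = 0 for every x ∈ ℝ; in particular, for each x ∈ ℝ the vectors (ψ₁(x), ψ₂(x)) and (φ₁(x), φ₂(x)) in ℂ² are linearly dependent. -/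
/-- `(ψ₁, ψ₂)` solves the Dirac eigenvalue system for the fibered magnetic Dirac operator
`Ĥ(ζ) = D_x σ₁ + (ζ − A₂(x)) σ₂ + m(x) σ₃ + V(x) σ₀` with eigenvalue `μ`. -/
def SolvesDirac (A₂ m V : ℝ → ℝ) (ζ μ : ℝ) (ψ₁ ψ₂ : ℝ → ℂ) : Prop :=
  (∀ x, DifferentiableAt ℝ ψ₁ x) ∧ (∀ x, DifferentiableAt ℝ ψ₂ x) ∧
  (∀ x : ℝ,
    -Complex.I * deriv ψ₂ x - Complex.I * ((ζ : ℂ) - (A₂ x : ℂ)) * ψ₂ x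
      + ((V x : ℂ) + (m x : ℂ)) * ψ₁ x = (μ : ℂ) * ψ₁ x) ∧
  (∀ x : ℝ,
    -Complex.I * deriv ψ₁ x + Complex.I * ((ζ : ℂ) - (A₂ x : ℂ)) * ψ₁ x
      + ((V x : ℂ) - (m x : ℂ)) * ψ₂ x = (μ : ℂ) * ψ₂ x)

/-!
Solved for the derivatives, the Dirac eigenvalue system is a linear system `Ψ' = M Ψ` in which
`M = !![ζ - A₂, I (μ - V + m); I (μ - V - m), -(ζ - A₂)]` has trace zero. By Liouville's formula
`W' = (tr M) W` the Wronskian `W` of two solutions is constant, and it tends to `0` as soon as one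
of the solutions decays while the other stays bounded.
-/

open Filter Topology

/-- The Wronskian of two solutions `(ψ₁, ψ₂)` and `(φ₁, φ₂)` of a planar first-order system, that
is, the determinant of the matrix having them as columns. -/
def wronskian {X R : Type*} [CommRing R] (ψ₁ ψ₂ φ₁ φ₂ : X → R) (x : X) : R :=
  ψ₁ x * φ₂ x - ψ₂ x * φ₁ x

theorem hasDerivAt_wronskian {𝕜 𝔸 : Type*} [NontriviallyNormedField 𝕜] [NormedCommRing 𝔸]
    [NormedAlgebra 𝕜 𝔸] {ψ₁ ψ₂ φ₁ φ₂ : 𝕜 → 𝔸} {a b c d : 𝔸} {x : 𝕜}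
    (hψ₁ : HasDerivAt ψ₁ (a * ψ₁ x + b * ψ₂ x) x) (hψ₂ : HasDerivAt ψ₂ (c * ψ₁ x + d * ψ₂ x) x)
    (hφ₁ : HasDerivAt φ₁ (a * φ₁ x + b * φ₂ x) x) (hφ₂ : HasDerivAt φ₂ (c * φ₁ x + d * φ₂ x) x) :
    HasDerivAt (wronskian ψ₁ ψ₂ φ₁ φ₂) ((a + d) * wronskian ψ₁ ψ₂ φ₁ φ₂ x) x := by
  refine ((hψ₁.mul hφ₂).sub (hψ₂.mul hφ₁)).congr_deriv ?_
  unfold wronskian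
  ring

theorem tendsto_wronskian_zero_of_isBoundedUnder {X R : Type*} [SeminormedCommRing R]
    {ψ₁ ψ₂ φ₁ φ₂ : X → R} {l : Filter X}
    (hψ₁ : l.IsBoundedUnder (· ≤ ·) (‖ψ₁ ·‖)) (hψ₂ : l.IsBoundedUnder (· ≤ ·) (‖ψ₂ ·‖))
    (hφ₁ : Tendsto φ₁ l (𝓝 0)) (hφ₂ : Tendsto φ₂ l (𝓝 0)) :
    Tendsto (wronskian ψ₁ ψ₂ φ₁ φ₂) l (𝓝 0) := by
  have hψ₁φ₂ : Tendsto (fun x => ψ₁ x * φ₂ x) l (𝓝 0) := isBoundedUnder_le_mul_tendsto_zero hψ₁ hφ₂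
  have hψ₂φ₁ : Tendsto (fun x => ψ₂ x * φ₁ x) l (𝓝 0) := isBoundedUnder_le_mul_tendsto_zero hψ₂ hφ₁
  exact sub_zero (0 : R) ▸ hψ₁φ₂.sub hψ₂φ₁

theorem eq_of_hasDerivAt_zero_of_tendsto {𝕜 E : Type*} [RCLike 𝕜] [NormedAddCommGroup E]
    [NormedSpace 𝕜 E] {f : 𝕜 → E} {l : Filter 𝕜} [l.NeBot] {c : E}
    (hf : ∀ x, HasDerivAt f 0 x) (hlim : Tendsto f l (𝓝 c)) (x : 𝕜) : f x = c := by
  have hconst : f = fun _ => f x := funext fun y =>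
    is_const_of_deriv_eq_zero (fun z => (hf z).differentiableAt) (fun z => (hf z).deriv) y x
  rw [hconst] at hlim
  exact tendsto_nhds_unique tendsto_const_nhds hlim

theorem exists_linear_relation_of_mul_sub_mul_eq_zero {R : Type*} [CommRing R] [IsDomain R]
    {p q r s : R} (h : p * s - q * r = 0) :
    ∃ a b : R, (a ≠ 0 ∨ b ≠ 0) ∧ a * p + b * r = 0 ∧ a * q + b * s = 0 := by
  have hdet : !![p, q; r, s].det = 0 := by rw [Matrix.det_fin_two_of, h]
  obtain ⟨v, hv, hv_mul⟩ := Matrix.exists_vecMul_eq_zero_iff.mpr hdet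
  refine ⟨v 0, v 1, ?_, ?_, ?_⟩
  · contrapose! hv
    exact funext (Fin.forall_fin_two.mpr hv)
  · simpa [Matrix.vecMul, dotProduct] using congrFun hv_mul 0
  · simpa [Matrix.vecMul, dotProduct] using congrFun hv_mul 1

namespace SolvesDirac

variable {A₂ m V : ℝ → ℝ} {ζ μ : ℝ} {ψ₁ ψ₂ φ₁ φ₂ : ℝ → ℂ}

theorem hasDerivAt_fst (h : SolvesDirac A₂ m V ζ μ ψ₁ ψ₂) (x : ℝ) :
    HasDerivAt ψ₁ ((ζ - A₂ x) * ψ₁ x + Complex.I * (μ - V x + m x) * ψ₂ x) x := by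
  obtain ⟨hdiff, -, -, heq⟩ := h
  refine (hdiff x).hasDerivAt.congr_deriv (mul_left_cancel₀ Complex.I_ne_zero ?_)
  linear_combination -heq x - (μ - V x + m x) * ψ₂ x * Complex.I_mul_I

theorem hasDerivAt_snd (h : SolvesDirac A₂ m V ζ μ ψ₁ ψ₂) (x : ℝ) :
    HasDerivAt ψ₂ (Complex.I * (μ - V x - m x) * ψ₁ x + -(ζ - A₂ x) * ψ₂ x) x := by
  obtain ⟨-, hdiff, heq, -⟩ := h
  refine (hdiff x).hasDerivAt.congr_deriv (mul_left_cancel₀ Complex.I_ne_zero ?_)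
  linear_combination -heq x - (μ - V x - m x) * ψ₁ x * Complex.I_mul_I

theorem hasDerivAt_wronskian_zero (hψ : SolvesDirac A₂ m V ζ μ ψ₁ ψ₂)
    (hφ : SolvesDirac A₂ m V ζ μ φ₁ φ₂) (x : ℝ) :
    HasDerivAt (wronskian ψ₁ ψ₂ φ₁ φ₂) 0 x := by
  simpa only [add_neg_cancel, zero_mul] using
    hasDerivAt_wronskian (hψ.hasDerivAt_fst x) (hψ.hasDerivAt_snd x)
      (hφ.hasDerivAt_fst x) (hφ.hasDerivAt_snd x)

end SolvesDirac

theorem wronskian_vanishes_of_decay_general {A₂ m V : ℝ → ℝ} {ζ μ : ℝ} {ψ₁ ψ₂ φ₁ φ₂ : ℝ → ℂ}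
    {l : Filter ℝ} [l.NeBot]
    (hψ : SolvesDirac A₂ m V ζ μ ψ₁ ψ₂) (hφ : SolvesDirac A₂ m V ζ μ φ₁ φ₂)
    (hψ₁ : l.IsBoundedUnder (· ≤ ·) (‖ψ₁ ·‖)) (hψ₂ : l.IsBoundedUnder (· ≤ ·) (‖ψ₂ ·‖))
    (hφ₁ : Tendsto φ₁ l (𝓝 0)) (hφ₂ : Tendsto φ₂ l (𝓝 0)) :
    (∀ x : ℝ, ψ₁ x * φ₂ x - ψ₂ x * φ₁ x = 0) ∧
      ∀ x : ℝ, ∃ a b : ℂ, (a ≠ 0 ∨ b ≠ 0) ∧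
        a * ψ₁ x + b * φ₁ x = 0 ∧ a * ψ₂ x + b * φ₂ x = 0 := by
  have hW : ∀ x, wronskian ψ₁ ψ₂ φ₁ φ₂ x = 0 :=
    eq_of_hasDerivAt_zero_of_tendsto (hψ.hasDerivAt_wronskian_zero hφ)
      (tendsto_wronskian_zero_of_isBoundedUnder hψ₁ hψ₂ hφ₁ hφ₂)
  exact ⟨hW, fun x => exists_linear_relation_of_mul_sub_mul_eq_zero (hW x)⟩

/-- Two solutions of the Dirac eigenvalue system with the same eigenvalue that decay at
`+∞` have identically vanishing Wronskian; in particular they are pointwise linearly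
dependent. -/
theorem wronskian_vanishes_of_decay (A₂ m V : ℝ → ℝ) (ζ μ : ℝ)
    (ψ₁ ψ₂ φ₁ φ₂ : ℝ → ℂ)
    (hψ : SolvesDirac A₂ m V ζ μ ψ₁ ψ₂) (hφ : SolvesDirac A₂ m V ζ μ φ₁ φ₂)
    (hψ₁ : Filter.Tendsto ψ₁ Filter.atTop (nhds 0))
    (hψ₂ : Filter.Tendsto ψ₂ Filter.atTop (nhds 0))
    (hφ₁ : Filter.Tendsto φ₁ Filter.atTop (nhds 0))
    (hφ₂ : Filter.Tendsto φ₂ Filter.atTop (nhds 0)) :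
    (∀ x : ℝ, ψ₁ x * φ₂ x - ψ₂ x * φ₁ x = 0) ∧
      ∀ x : ℝ, ∃ a b : ℂ, (a ≠ 0 ∨ b ≠ 0) ∧
        a * ψ₁ x + b * φ₁ x = 0 ∧ a * ψ₂ x + b * φ₂ x = 0 :=
  wronskian_vanishes_of_decay_general hψ hφ hψ₁.norm.isBoundedUnder_le
    hψ₂.norm.isBoundedUnder_le hφ₁ hφ₂
end

section
/- Let A₂, m, V : ℝ → ℝ be smooth functions, ζ, μ ∈ ℝ, and suppose the pairs (ψ₁, ψ₂) and (φ₁, φ₂) of continuously differentiable functions ℝ → ℂ both solve the Dirac eigenvalue system with data A₂, m, V, ζ and the same eigenvalue μ. If ψ₁, ψ₂, φ₁, φ₂ all tend to 0 as x → +∞, then the two solutions are linearly dependent as functions: there exist complex numbers a, b, not both zero, such that a·ψ₁ + b·φ₁ ≡ 0 and a·ψ₂ + b·φ₂ ≡ 0 on ℝ. (This expresses the simplicity of every eigenvalue of the fibered operator Ĥ(ζ).) -/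
/-!
Solved for the derivatives, the Dirac system is a linear first order system `u' = A(x) u` with
continuous and trace-free coefficient matrix. By Liouville's formula the Wronskian of two solutions
is constant, and decay forces this constant to be zero. Hence some nontrivial linear combination of
the two solutions vanishes at a point, and by uniqueness for the initial value problem it vanishes
everywhere.
-/

open Filter Matrix Topology

section LinearSystem

theorem eq_of_hasDerivAt_clm_apply {𝕜 E : Type*} [NontriviallyNormedField 𝕜]
    [NormedAddCommGroup E] [NormedSpace 𝕜 E] [NormedSpace ℝ E]
    {A : ℝ → E →L[𝕜] E} (hA : Continuous A) {u v : ℝ → E}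
    (hu : ∀ t, HasDerivAt u (A t (u t)) t) (hv : ∀ t, HasDerivAt v (A t (v t)) t)
    {t₀ : ℝ} (h₀ : u t₀ = v t₀) : u = v := by
  ext t
  obtain ⟨a, b, hab₀, hab⟩ : ∃ a b, t₀ ∈ Set.Ioo a b ∧ t ∈ Set.Ioo a b :=
    ⟨min t₀ t - 1, max t₀ t + 1, by grind, by grind⟩
  obtain ⟨C, hC⟩ := isCompact_Icc.exists_bound_of_continuousOn hA.continuousOn (s := Set.Icc a b)
  have lipschitzOnWith_A : ∀ s ∈ Set.Ioo a b, LipschitzOnWith C.toNNReal (A s) Set.univ :=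
    fun s hs ↦ ((A s).lipschitz.weaken
      (NNReal.le_toNNReal_of_coe_le (hC s (Set.Ioo_subset_Icc_self hs)))).lipschitzOnWith
  exact ODE_solution_unique_of_mem_Ioo lipschitzOnWith_A hab₀ (fun s _ ↦ ⟨hu s, trivial⟩)
    (fun s _ ↦ ⟨hv s, trivial⟩) h₀ hab

variable {n : Type*} [Fintype n]

theorem eq_zero_of_hasDerivAt_mulVec {𝕜 : Type*} [RCLike 𝕜] {A : ℝ → Matrix n n 𝕜}
    (hA : Continuous A) {u : ℝ → n → 𝕜} (hu : ∀ t, HasDerivAt u (A t *ᵥ u t) t)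
    {t₀ : ℝ} (h₀ : u t₀ = 0) : u = 0 := by
  let toCLM : Matrix n n 𝕜 →ₗ[𝕜] (n → 𝕜) →L[𝕜] (n → 𝕜) :=
    LinearMap.toContinuousLinearMap.toLinearMap ∘ₗ mulVecBilin 𝕜 𝕜
  have continuous_toCLM_comp : Continuous fun t ↦ toCLM (A t) :=
    toCLM.continuous_of_finiteDimensional.comp hA
  have hasDerivAt_zero (t : ℝ) : HasDerivAt (0 : ℝ → n → 𝕜) (toCLM (A t) 0) t := by
    rw [map_zero]
    exact hasDerivAt_const t 0
  exact eq_of_hasDerivAt_clm_apply continuous_toCLM_comp hu hasDerivAt_zero h₀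

variable [DecidableEq n]

theorem hasDerivAt_det {𝕜 R : Type*} [NontriviallyNormedField 𝕜] [NormedCommRing R]
    [NormedAlgebra 𝕜 R] {X : 𝕜 → Matrix n n R} {X' : Matrix n n R} {t : 𝕜}
    (hX : HasDerivAt X X' t) :
    HasDerivAt (fun s ↦ (X s).det) (∑ i, ((X t).updateRow i (X' i)).det) t := by
  let detRows : ContinuousMultilinearMap 𝕜 (fun _ : n ↦ n → R) R :=
    ⟨(detRowAlternating : (n → R) [⋀^n]→ₗ[R] R).toMultilinearMap.restrictScalars 𝕜,
      continuous_id.matrix_det⟩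
  have hasDerivAt_detRows :=
    (HasFDerivAt.multilinear_comp detRows fun i ↦ (hasDerivAt_pi.1 hX i).hasFDerivAt).hasDerivAt
  refine hasDerivAt_detRows.congr_deriv ?_
  simp only [_root_.sum_apply, ContinuousLinearMap.comp_apply,
    ContinuousLinearMap.toSpanSingleton_apply, one_smul]
  rfl

theorem sum_det_updateRow_mul {R : Type*} [CommRing R] (A X : Matrix n n R) :
    ∑ i, (X.updateRow i ((A * X) i)).det = A.trace * X.det := by
  simp_rw [mul_apply_eq_vecMul, vecMul_eq_sum, det_updateRow_sum, smul_eq_mul, trace,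
    Finset.sum_mul, diag_apply]

theorem hasDerivAt_det_of_hasDerivAt_mul {𝕜 R : Type*} [NontriviallyNormedField 𝕜]
    [NormedCommRing R] [NormedAlgebra 𝕜 R] {X : 𝕜 → Matrix n n R} {A : Matrix n n R} {t : 𝕜}
    (hX : HasDerivAt X (A * X t) t) :
    HasDerivAt (fun s ↦ (X s).det) (A.trace * (X t).det) t := by
  rw [← sum_det_updateRow_mul]
  exact hasDerivAt_det hX

theorem det_eq_zero_of_tendsto_zero_of_trace_eq_zero {𝕜 R : Type*} [RCLike 𝕜] [NormedCommRing R]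
    [NormedAlgebra 𝕜 R] {A X : 𝕜 → Matrix n n R} (hX : ∀ t, HasDerivAt X (A t * X t) t)
    (hA : ∀ t, (A t).trace = 0) {l : Filter 𝕜} [l.NeBot]
    (hl : Tendsto (fun t ↦ (X t).det) l (𝓝 0)) (t : 𝕜) : (X t).det = 0 := by
  have hasDerivAt_det_zero (s : 𝕜) : HasDerivAt (fun s ↦ (X s).det) 0 s := by
    simpa only [hA, zero_mul] using hasDerivAt_det_of_hasDerivAt_mul (hX s)
  have det_const (s : 𝕜) : (X s).det = (X t).det :=
    is_const_of_deriv_eq_zero (fun s ↦ (hasDerivAt_det_zero s).differentiableAt)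
      (fun s ↦ (hasDerivAt_det_zero s).deriv) s t
  simp only [det_const] at hl
  exact tendsto_nhds_unique tendsto_const_nhds hl

theorem exists_ne_zero_forall_mulVec_eq_zero {𝕜 : Type*} [RCLike 𝕜] {A X : ℝ → Matrix n n 𝕜}
    (hA : Continuous A) (hX : ∀ t, HasDerivAt X (A t * X t) t)
    {t₀ : ℝ} (h₀ : (X t₀).det = 0) :
    ∃ c ≠ 0, ∀ t, X t *ᵥ c = 0 := by
  obtain ⟨c, hc, hXc⟩ := exists_mulVec_eq_zero_iff.2 h₀
  have hasDerivAt_mulVec (t : ℝ) : HasDerivAt (fun s ↦ X s *ᵥ c) (A t *ᵥ (X t *ᵥ c)) t := by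
    rw [mulVec_mulVec]
    exact hasDerivAt_pi.2 fun i ↦ HasDerivAt.fun_sum fun j _ ↦
      (hasDerivAt_pi.1 (hasDerivAt_pi.1 (hX t) i) j).mul_const (c j)
  exact ⟨c, hc, congrFun (eq_zero_of_hasDerivAt_mulVec hA hasDerivAt_mulVec hXc)⟩

end LinearSystem

section Dirac

/-- The coefficient matrix of the Dirac eigenvalue system solved for the derivatives, that is
`(ψ₁', ψ₂') = diracMatrix A₂ m V ζ μ x *ᵥ (ψ₁, ψ₂)`. -/
def diracMatrix (A₂ m V : ℝ → ℝ) (ζ μ x : ℝ) : Matrix (Fin 2) (Fin 2) ℂ :=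
  !![(ζ : ℂ) - A₂ x, -Complex.I * (V x - m x - μ);
    -Complex.I * (V x + m x - μ), -((ζ : ℂ) - A₂ x)]

variable {A₂ m V : ℝ → ℝ} {ζ μ : ℝ} {ψ₁ ψ₂ φ₁ φ₂ : ℝ → ℂ}

theorem continuous_diracMatrix (hA₂ : Continuous A₂) (hm : Continuous m) (hV : Continuous V) :
    Continuous (diracMatrix A₂ m V ζ μ) := by
  refine continuous_matrix fun i j ↦ ?_
  fin_cases i <;> fin_cases j <;> dsimp [diracMatrix] <;> fun_prop

theorem trace_diracMatrix (x : ℝ) : (diracMatrix A₂ m V ζ μ x).trace = 0 := by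
  rw [diracMatrix, trace_fin_two_of, add_neg_cancel]

namespace SolvesDirac

theorem deriv_fst_eq (hψ : SolvesDirac A₂ m V ζ μ ψ₁ ψ₂) (x : ℝ) :
    deriv ψ₁ x = (ζ - A₂ x) * ψ₁ x + -Complex.I * (V x - m x - μ) * ψ₂ x := by
  obtain ⟨-, -, -, h⟩ := hψ
  linear_combination Complex.I * h x + (deriv ψ₁ x - (ζ - A₂ x) * ψ₁ x) * Complex.I_sq

theorem deriv_snd_eq (hψ : SolvesDirac A₂ m V ζ μ ψ₁ ψ₂) (x : ℝ) :
    deriv ψ₂ x = -Complex.I * (V x + m x - μ) * ψ₁ x + -(ζ - A₂ x) * ψ₂ x := by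
  obtain ⟨-, -, h, -⟩ := hψ
  linear_combination Complex.I * h x + (deriv ψ₂ x + (ζ - A₂ x) * ψ₂ x) * Complex.I_sq

theorem hasDerivAt_matrix (hψ : SolvesDirac A₂ m V ζ μ ψ₁ ψ₂) (hφ : SolvesDirac A₂ m V ζ μ φ₁ φ₂)
    (x : ℝ) :
    HasDerivAt (fun y ↦ !![ψ₁ y, φ₁ y; ψ₂ y, φ₂ y])
      (diracMatrix A₂ m V ζ μ x * !![ψ₁ x, φ₁ x; ψ₂ x, φ₂ x]) x := by
  rw [diracMatrix, mul_fin_two, ← hψ.deriv_fst_eq, ← hψ.deriv_snd_eq, ← hφ.deriv_fst_eq,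
    ← hφ.deriv_snd_eq]
  refine hasDerivAt_pi.2 fun i ↦ hasDerivAt_pi.2 fun j ↦ ?_
  fin_cases i <;> fin_cases j
  exacts [(hψ.1 x).hasDerivAt, (hφ.1 x).hasDerivAt, (hψ.2.1 x).hasDerivAt, (hφ.2.1 x).hasDerivAt]

end SolvesDirac

theorem eigenvalue_simple_general (hA₂ : Continuous A₂) (hm : Continuous m) (hV : Continuous V)
    (hψ : SolvesDirac A₂ m V ζ μ ψ₁ ψ₂) (hφ : SolvesDirac A₂ m V ζ μ φ₁ φ₂)
    {l : Filter ℝ} [l.NeBot] (hψ₁ : Tendsto ψ₁ l (𝓝 0)) (hψ₂ : Tendsto ψ₂ l (𝓝 0))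
    (hφ₁ : IsBoundedUnder (· ≤ ·) l (norm ∘ φ₁)) (hφ₂ : IsBoundedUnder (· ≤ ·) l (norm ∘ φ₂)) :
    ∃ a b : ℂ, (a ≠ 0 ∨ b ≠ 0) ∧
      (∀ x : ℝ, a * ψ₁ x + b * φ₁ x = 0) ∧ (∀ x : ℝ, a * ψ₂ x + b * φ₂ x = 0) := by
  have hX := hψ.hasDerivAt_matrix hφ
  have wronskian_tendsto : Tendsto (fun x ↦ !![ψ₁ x, φ₁ x; ψ₂ x, φ₂ x].det) l (𝓝 0) := by
    simpa only [det_fin_two_of, sub_zero] using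
      (hψ₁.zero_mul_isBoundedUnder_le hφ₂).sub (isBoundedUnder_le_mul_tendsto_zero hφ₁ hψ₂)
  have wronskian_eq_zero :=
    det_eq_zero_of_tendsto_zero_of_trace_eq_zero hX trace_diracMatrix wronskian_tendsto 0
  obtain ⟨c, hc, hXc⟩ :=
    exists_ne_zero_forall_mulVec_eq_zero (continuous_diracMatrix hA₂ hm hV) hX wronskian_eq_zero
  refine ⟨c 0, c 1, ?_, fun x ↦ ?_, fun x ↦ ?_⟩
  · simpa only [Function.ne_iff, Fin.exists_fin_two, Pi.zero_apply] using hc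
  · simpa [mulVec_eq_sum] using congrFun (hXc x) 0
  · simpa [mulVec_eq_sum] using congrFun (hXc x) 1

end Dirac

/-- Simplicity of eigenvalues of the fibered operator `Ĥ(ζ)`: two decaying `C¹` solutions
of the Dirac eigenvalue system with the same eigenvalue are globally linearly dependent. -/
theorem eigenvalue_simple (A₂ m V : ℝ → ℝ)
    (hA₂ : ContDiff ℝ (⊤ : ℕ∞) A₂) (hm : ContDiff ℝ (⊤ : ℕ∞) m) (hV : ContDiff ℝ (⊤ : ℕ∞) V)
    (ζ μ : ℝ) (ψ₁ ψ₂ φ₁ φ₂ : ℝ → ℂ)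
    (hψ₁C : ContDiff ℝ 1 ψ₁) (hψ₂C : ContDiff ℝ 1 ψ₂)
    (hφ₁C : ContDiff ℝ 1 φ₁) (hφ₂C : ContDiff ℝ 1 φ₂)
    (hψ : SolvesDirac A₂ m V ζ μ ψ₁ ψ₂) (hφ : SolvesDirac A₂ m V ζ μ φ₁ φ₂)
    (hψ₁ : Filter.Tendsto ψ₁ Filter.atTop (nhds 0))
    (hψ₂ : Filter.Tendsto ψ₂ Filter.atTop (nhds 0))
    (hφ₁ : Filter.Tendsto φ₁ Filter.atTop (nhds 0))
    (hφ₂ : Filter.Tendsto φ₂ Filter.atTop (nhds 0)) :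
    ∃ a b : ℂ, (a ≠ 0 ∨ b ≠ 0) ∧
      (∀ x : ℝ, a * ψ₁ x + b * φ₁ x = 0) ∧ (∀ x : ℝ, a * ψ₂ x + b * φ₂ x = 0) := by
  exact eigenvalue_simple_general hA₂.continuous hm.continuous hV.continuous hψ hφ hψ₁ hψ₂
    hφ₁.norm.isBoundedUnder_le hφ₂.norm.isBoundedUnder_le
end

section
/- Let A₂ : ℝ → ℝ be smooth with bounded derivative, and let m₀ ∈ ℝ satisfy m₀² > sup_{x ∈ ℝ} |A₂′(x)|. Then for every ζ ∈ ℝ and every pair of smooth compactly supported functions ψ₁, ψ₂ : ℝ → ℂ, with u = −i·ψ₂′ − i·(ζ − A₂)·ψ₂ + m₀·ψ₁ and v = −i·ψ₁′ + i·(ζ − A₂)·ψ₁ − m₀·ψ₂, one has ∫_ℝ (|u(x)|² + |v(x)|²) dx ≥ (m₀² − sup_{x ∈ ℝ} |A₂′(x)|) · ∫_ℝ (|ψ₁(x)|² + |ψ₂(x)|²) dx. (This expresses that the operator Ĥ₀(ζ) = D_x σ₁ + (ζ − A₂(x)) σ₂ + m₀ σ₃ has a spectral gap in the interval (−Δ,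 Δ) with Δ = √(m₀² − ‖A₂′‖_∞).) -/
/-!
Write `W = ζ - A₂`. Since `σ₃` anticommutes with `D_x σ₁ + W σ₂`, formally
`Ĥ₀² = D_x² + W² + m₀² + W' σ₃`. At the level of densities, `|u|² + |v|²` differs from the density
of the quadratic form of the right-hand side by the derivative of a compactly supported function,
which integrates to zero. What remains is nonnegative apart from `m₀²` and `W' σ₃ ≥ -‖W'‖_∞`.
-/

open MeasureTheory

/-- The upper component of `(D_x σ₁ + W σ₂ + m σ₃) (ψ₁, ψ₂)`, where `D_x = -i d/dx`. -/
noncomputable def diracUpper (W : ℝ → ℝ) (m : ℝ) (ψ₁ ψ₂ : ℝ → ℂ) (x : ℝ) : ℂ :=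
  -Complex.I * deriv ψ₂ x - Complex.I * W x * ψ₂ x + m * ψ₁ x

/-- The lower component of `(D_x σ₁ + W σ₂ + m σ₃) (ψ₁, ψ₂)`, where `D_x = -i d/dx`. -/
noncomputable def diracLower (W : ℝ → ℝ) (m : ℝ) (ψ₁ ψ₂ : ℝ → ℂ) (x : ℝ) : ℂ :=
  -Complex.I * deriv ψ₁ x + Complex.I * W x * ψ₁ x - m * ψ₂ x

/-- The density of the quadratic form of `D_x² + W² + m² + W' σ₃`, the formal square of the Dirac
operator, after the second-order term has been integrated by parts. -/
noncomputable def diracSqDensity (W : ℝ → ℝ) (m : ℝ) (ψ₁ ψ₂ : ℝ → ℂ) (x : ℝ) : ℝ :=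
  ‖deriv ψ₁ x‖ ^ 2 + ‖deriv ψ₂ x‖ ^ 2 + (W x ^ 2 + m ^ 2) * (‖ψ₁ x‖ ^ 2 + ‖ψ₂ x‖ ^ 2)
    + deriv W x * (‖ψ₁ x‖ ^ 2 - ‖ψ₂ x‖ ^ 2)

/-- The boundary term of the integration by parts that turns `‖(D_x σ₁ + W σ₂ + m σ₃) ψ‖²` into
the quadratic form of the squared operator. -/
noncomputable def diracFlux (W : ℝ → ℝ) (m : ℝ) (ψ₁ ψ₂ : ℝ → ℂ) (x : ℝ) : ℝ :=
  W x * (‖ψ₂ x‖ ^ 2 - ‖ψ₁ x‖ ^ 2) + 2 * m * inner ℝ (ψ₂ x) (Complex.I * ψ₁ x)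

theorem diracLower_eq_diracUpper (W : ℝ → ℝ) (m : ℝ) (ψ₁ ψ₂ : ℝ → ℂ) :
    diracLower W m ψ₁ ψ₂ = diracUpper (-W) (-m) ψ₂ ψ₁ := by
  ext x
  simp only [diracLower, diracUpper, Pi.neg_apply, Complex.ofReal_neg]
  ring

section Pointwise

theorem norm_sq_add_norm_sq_dirac_symbol (w m : ℝ) (p₁ p₂ d₁ d₂ : ℂ) :
    ‖-Complex.I * d₂ - Complex.I * w * p₂ + m * p₁‖ ^ 2
        + ‖-Complex.I * d₁ + Complex.I * w * p₁ - m * p₂‖ ^ 2 =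
      ‖d₁‖ ^ 2 + ‖d₂‖ ^ 2 + (w ^ 2 + m ^ 2) * (‖p₁‖ ^ 2 + ‖p₂‖ ^ 2)
        + w * (2 * inner ℝ p₂ d₂ - 2 * inner ℝ p₁ d₁)
        + 2 * m * (inner ℝ p₂ (Complex.I * d₁) + inner ℝ d₂ (Complex.I * p₁)) := by
  simp only [Complex.sq_norm, Complex.normSq_apply, Complex.inner, Complex.add_re, Complex.add_im,
    Complex.sub_re, Complex.sub_im, Complex.neg_re, Complex.neg_im, Complex.mul_re, Complex.mul_im,
    Complex.I_re, Complex.I_im, Complex.ofReal_re, Complex.ofReal_im, Complex.conj_re,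
    Complex.conj_im]
  ring

variable {W : ℝ → ℝ} {W' : ℝ} {ψ₁ ψ₂ : ℝ → ℂ} {ψ₁' ψ₂' : ℂ} {x : ℝ}

theorem hasDerivAt_diracFlux (m : ℝ) (hW : HasDerivAt W W' x)
    (h₁ : HasDerivAt ψ₁ ψ₁' x) (h₂ : HasDerivAt ψ₂ ψ₂' x) :
    HasDerivAt (diracFlux W m ψ₁ ψ₂)
      (W' * (‖ψ₂ x‖ ^ 2 - ‖ψ₁ x‖ ^ 2)
        + W x * (2 * inner ℝ (ψ₂ x) ψ₂' - 2 * inner ℝ (ψ₁ x) ψ₁')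
        + 2 * m * (inner ℝ (ψ₂ x) (Complex.I * ψ₁') + inner ℝ ψ₂' (Complex.I * ψ₁ x))) x :=
  (hW.mul (h₂.norm_sq.sub h₁.norm_sq)).add
    ((h₂.inner ℝ (h₁.const_mul Complex.I)).const_mul (2 * m))

theorem norm_sq_diracUpper_add_norm_sq_diracLower (m : ℝ) (hW : DifferentiableAt ℝ W x)
    (h₁ : DifferentiableAt ℝ ψ₁ x) (h₂ : DifferentiableAt ℝ ψ₂ x) :
    ‖diracUpper W m ψ₁ ψ₂ x‖ ^ 2 + ‖diracLower W m ψ₁ ψ₂ x‖ ^ 2 =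
      diracSqDensity W m ψ₁ ψ₂ x + deriv (diracFlux W m ψ₁ ψ₂) x := by
  rw [(hasDerivAt_diracFlux m hW.hasDerivAt h₁.hasDerivAt h₂.hasDerivAt).deriv,
    diracUpper, diracLower, norm_sq_add_norm_sq_dirac_symbol, diracSqDensity]
  ring

theorem le_diracSqDensity (m : ℝ) {S : ℝ} (hS : |deriv W x| ≤ S) :
    (m ^ 2 - S) * (‖ψ₁ x‖ ^ 2 + ‖ψ₂ x‖ ^ 2) ≤ diracSqDensity W m ψ₁ ψ₂ x := by
  obtain ⟨neg_le, le⟩ := abs_le.mp hS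
  have upper_nonneg : 0 ≤ (S + deriv W x) * ‖ψ₁ x‖ ^ 2 :=
    mul_nonneg (by linarith) (sq_nonneg _)
  have lower_nonneg : 0 ≤ (S - deriv W x) * ‖ψ₂ x‖ ^ 2 :=
    mul_nonneg (by linarith) (sq_nonneg _)
  have rest_nonneg : 0 ≤ ‖deriv ψ₁ x‖ ^ 2 + ‖deriv ψ₂ x‖ ^ 2
      + W x ^ 2 * (‖ψ₁ x‖ ^ 2 + ‖ψ₂ x‖ ^ 2) := by positivity
  unfold diracSqDensity
  linarith

end Pointwise

section Integral

theorem hasCompactSupport_norm_sq {X E : Type*} [TopologicalSpace X] [NormedAddCommGroup E]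
    {f : X → E} (hf : HasCompactSupport f) : HasCompactSupport fun x => ‖f x‖ ^ 2 :=
  hf.comp_left (g := fun z => ‖z‖ ^ 2) (by simp)

theorem integrable_mul_norm_sq {X E : Type*} [TopologicalSpace X] [T2Space X] [MeasurableSpace X]
    [OpensMeasurableSpace X] {μ : Measure X} [NormedAddCommGroup E] {g : X → ℝ} {f : X → E}
    (hg : LocallyIntegrable g μ) (hf : Continuous f) (hcf : HasCompactSupport f) :
    Integrable (fun x => g x * ‖f x‖ ^ 2) μ :=
  hg.integrable_smul_right_of_hasCompactSupport (hf.norm.pow 2) (hasCompactSupport_norm_sq hcf)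

theorem integrable_norm_sq_of_hasCompactSupport {X E : Type*} [TopologicalSpace X]
    [MeasurableSpace X] [OpensMeasurableSpace X] {μ : Measure X} [IsFiniteMeasureOnCompacts μ]
    [NormedAddCommGroup E] {f : X → E} (hf : Continuous f) (hcf : HasCompactSupport f) :
    Integrable (fun x => ‖f x‖ ^ 2) μ :=
  (hf.norm.pow 2).integrable_of_hasCompactSupport (hasCompactSupport_norm_sq hcf)

theorem locallyIntegrable_deriv_of_bounded {E : Type*} [NormedAddCommGroup E] [NormedSpace ℝ E]
    [CompleteSpace E] {f : ℝ → E} {C : ℝ} (hC : ∀ x, ‖deriv f x‖ ≤ C) :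
    LocallyIntegrable (deriv f) :=
  (locallyIntegrable_const C).mono (stronglyMeasurable_deriv f).aestronglyMeasurable
    (.of_forall fun x => (hC x).trans (le_abs_self C))

variable {W : ℝ → ℝ} {ψ₁ ψ₂ : ℝ → ℂ}

theorem integrable_norm_sq_diracUpper (m : ℝ) (hW : Continuous W) (h₁ : Continuous ψ₁)
    (h₂ : ContDiff ℝ 1 ψ₂) (hc₁ : HasCompactSupport ψ₁) (hc₂ : HasCompactSupport ψ₂) :
    Integrable fun x => ‖diracUpper W m ψ₁ ψ₂ x‖ ^ 2 := by
  refine integrable_norm_sq_of_hasCompactSupport ?_ ?_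
  · have := h₂.continuous_deriv_one
    unfold diracUpper
    fun_prop
  · exact (hc₂.deriv.mul_left.sub hc₂.mul_left).add hc₁.mul_left

theorem integrable_norm_sq_diracLower (m : ℝ) (hW : Continuous W) (h₁ : ContDiff ℝ 1 ψ₁)
    (h₂ : Continuous ψ₂) (hc₁ : HasCompactSupport ψ₁) (hc₂ : HasCompactSupport ψ₂) :
    Integrable fun x => ‖diracLower W m ψ₁ ψ₂ x‖ ^ 2 := by
  rw [diracLower_eq_diracUpper]
  exact integrable_norm_sq_diracUpper (-m) hW.neg h₂ h₁ hc₂ hc₁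

theorem integrable_diracFlux (m : ℝ) (hW : Continuous W) (h₁ : Continuous ψ₁)
    (h₂ : Continuous ψ₂) (hc₁ : HasCompactSupport ψ₁) (hc₂ : HasCompactSupport ψ₂) :
    Integrable (diracFlux W m ψ₁ ψ₂) := by
  refine Continuous.integrable_of_hasCompactSupport ?_ ?_
  · unfold diracFlux
    fun_prop
  · have hc_inner : HasCompactSupport fun x => inner ℝ (ψ₂ x) (Complex.I * ψ₁ x) :=
      hc₂.mono fun x hx h => hx (by simp [h])
    exact ((hasCompactSupport_norm_sq hc₂).sub (hasCompactSupport_norm_sq hc₁)).mul_left.add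
      hc_inner.mul_left

theorem integrable_diracSqDensity (m : ℝ) (hW : Continuous W)
    (hW' : LocallyIntegrable (deriv W)) (h₁ : ContDiff ℝ 1 ψ₁) (h₂ : ContDiff ℝ 1 ψ₂)
    (hc₁ : HasCompactSupport ψ₁) (hc₂ : HasCompactSupport ψ₂) :
    Integrable (diracSqDensity W m ψ₁ ψ₂) := by
  have hk₁ := integrable_norm_sq_of_hasCompactSupport (μ := volume)
    h₁.continuous_deriv_one hc₁.deriv
  have hk₂ := integrable_norm_sq_of_hasCompactSupport (μ := volume)
    h₂.continuous_deriv_one hc₂.deriv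
  have hV : LocallyIntegrable fun x => W x ^ 2 + m ^ 2 :=
    ((hW.pow 2).add continuous_const).locallyIntegrable
  have hV₁ := integrable_mul_norm_sq hV h₁.continuous hc₁
  have hV₂ := integrable_mul_norm_sq hV h₂.continuous hc₂
  have hW'₁ := integrable_mul_norm_sq hW' h₁.continuous hc₁
  have hW'₂ := integrable_mul_norm_sq hW' h₂.continuous hc₂
  unfold diracSqDensity
  simp only [mul_add, mul_sub]
  exact ((hk₁.add hk₂).add (hV₁.add hV₂)).add (hW'₁.sub hW'₂)

theorem integral_norm_sq_dirac (m : ℝ) (hW : Differentiable ℝ W)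
    (hW' : LocallyIntegrable (deriv W)) (h₁ : ContDiff ℝ 1 ψ₁) (h₂ : ContDiff ℝ 1 ψ₂)
    (hc₁ : HasCompactSupport ψ₁) (hc₂ : HasCompactSupport ψ₂) :
    ∫ x, (‖diracUpper W m ψ₁ ψ₂ x‖ ^ 2 + ‖diracLower W m ψ₁ ψ₂ x‖ ^ 2) =
      ∫ x, diracSqDensity W m ψ₁ ψ₂ x := by
  have hd₁ : Differentiable ℝ ψ₁ := h₁.differentiable one_ne_zero
  have hd₂ : Differentiable ℝ ψ₂ := h₂.differentiable one_ne_zero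
  have pointwise (x : ℝ) := norm_sq_diracUpper_add_norm_sq_diracLower m (hW x) (hd₁ x) (hd₂ x)
  have density_integrable := integrable_diracSqDensity m hW.continuous hW' h₁ h₂ hc₁ hc₂
  have flux_integrable :=
    integrable_diracFlux m hW.continuous h₁.continuous h₂.continuous hc₁ hc₂
  have deriv_flux_integrable : Integrable (deriv (diracFlux W m ψ₁ ψ₂)) := by
    have norm_sq_integrable :=
      (integrable_norm_sq_diracUpper m hW.continuous h₁.continuous h₂ hc₁ hc₂).add
        (integrable_norm_sq_diracLower m hW.continuous h₁ h₂.continuous hc₁ hc₂)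
    exact (norm_sq_integrable.sub density_integrable).congr
      (.of_forall fun x => sub_eq_of_eq_add' (pointwise x))
  have integral_deriv_flux : ∫ x, deriv (diracFlux W m ψ₁ ψ₂) x = 0 :=
    integral_eq_zero_of_hasDerivAt_of_integrable
      (fun x => (hasDerivAt_diracFlux m (hW x).hasDerivAt (hd₁ x).hasDerivAt
        (hd₂ x).hasDerivAt).differentiableAt.hasDerivAt)
      deriv_flux_integrable flux_integrable
  simp only [pointwise]
  rw [integral_add density_integrable deriv_flux_integrable, integral_deriv_flux, add_zero]

theorem dirac_spectral_gap_general {S : ℝ} (m : ℝ) (hW : Differentiable ℝ W)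
    (hS : ∀ x, |deriv W x| ≤ S) (h₁ : ContDiff ℝ 1 ψ₁) (h₂ : ContDiff ℝ 1 ψ₂)
    (hc₁ : HasCompactSupport ψ₁) (hc₂ : HasCompactSupport ψ₂) :
    (m ^ 2 - S) * ∫ x, (‖ψ₁ x‖ ^ 2 + ‖ψ₂ x‖ ^ 2) ≤
      ∫ x, (‖diracUpper W m ψ₁ ψ₂ x‖ ^ 2 + ‖diracLower W m ψ₁ ψ₂ x‖ ^ 2) := by
  have hW' : LocallyIntegrable (deriv W) := locallyIntegrable_deriv_of_bounded hS
  have norm_sq_integrable : Integrable fun x => ‖ψ₁ x‖ ^ 2 + ‖ψ₂ x‖ ^ 2 :=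
    (integrable_norm_sq_of_hasCompactSupport h₁.continuous hc₁).add
      (integrable_norm_sq_of_hasCompactSupport h₂.continuous hc₂)
  rw [integral_norm_sq_dirac m hW hW' h₁ h₂ hc₁ hc₂, ← integral_const_mul]
  exact integral_mono (norm_sq_integrable.const_mul _)
    (integrable_diracSqDensity m hW.continuous hW' h₁ h₂ hc₁ hc₂)
    fun x => le_diracSqDensity m (hS x)

end Integral

/-- Spectral gap for `Ĥ₀(ζ) = D_x σ₁ + (ζ − A₂(x)) σ₂ + m₀ σ₃` when
`m₀² > ‖A₂′‖_∞`: the quadratic form of `Ĥ₀²(ζ)` is bounded below by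
`m₀² − ‖A₂′‖_∞` on smooth compactly supported spinors. -/
theorem dirac_spectral_gap (A₂ : ℝ → ℝ) (hA₂ : ContDiff ℝ (⊤ : ℕ∞) A₂)
    (hbdd : BddAbove (Set.range fun x => |deriv A₂ x|))
    (m₀ : ℝ) (hm₀ : (⨆ x : ℝ, |deriv A₂ x|) < m₀ ^ 2) :
    ∀ ζ : ℝ, ∀ ψ₁ ψ₂ : ℝ → ℂ, ContDiff ℝ (⊤ : ℕ∞) ψ₁ → ContDiff ℝ (⊤ : ℕ∞) ψ₂ →
      HasCompactSupport ψ₁ → HasCompactSupport ψ₂ →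
      ∀ u v : ℝ → ℂ,
        (∀ x, u x = -Complex.I * deriv ψ₂ x
          - Complex.I * ((ζ : ℂ) - (A₂ x : ℂ)) * ψ₂ x + (m₀ : ℂ) * ψ₁ x) →
        (∀ x, v x = -Complex.I * deriv ψ₁ x
          + Complex.I * ((ζ : ℂ) - (A₂ x : ℂ)) * ψ₁ x - (m₀ : ℂ) * ψ₂ x) →
        (m₀ ^ 2 - ⨆ x : ℝ, |deriv A₂ x|) * ∫ x : ℝ, (‖ψ₁ x‖ ^ 2 + ‖ψ₂ x‖ ^ 2) ≤
          ∫ x : ℝ, (‖u x‖ ^ 2 + ‖v x‖ ^ 2) := by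
  intro ζ ψ₁ ψ₂ h₁ h₂ hc₁ hc₂ u v hu hv
  simpa only [hu, hv, diracUpper, diracLower, Complex.ofReal_sub] using
    dirac_spectral_gap_general (W := fun x => ζ - A₂ x) m₀
      ((hA₂.differentiable (by simp)).const_sub ζ)
      (fun x => by simpa using le_ciSup hbdd x)
      (h₁.of_le (by simp)) (h₂.of_le (by simp)) hc₁ hc₂
end

section
/- Let 𝓗 be a complex Hilbert space, let H₀ be a self-adjoint operator with dense domain D ⊆ 𝓗 (so that i + H₀ and i − H₀ map D bijectively onto 𝓗 with bounded inverses (i ± H₀)⁻¹ : 𝓗 → D), and let W : D → 𝓗 be a linear map that is symmetric, i.e. ⟪W u, v⟫ = ⟪u, W v⟫ for all u, v ∈ D. Assume that both compositions (i + H₀)⁻¹ ∘ W and (i − H₀)⁻¹ ∘ W, initially defined on D, extend to compact operators on 𝓗. Then the operator H₀ + W with domain D is self-adjoint. -/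
open scoped ComplexInnerProductSpace

/-!
A densely defined symmetric operator `T` is self-adjoint as soon as `z + T` and `z̄ + T` are onto.
For `T = H₀ + W` and `z` nonreal one factors `z + H₀ + W = (1 + W (z + H₀)⁻¹) (z + H₀)`, so that
surjectivity follows from the Fredholm alternative for `W (z + H₀)⁻¹`: by symmetry `z + H₀ + W` is
injective, hence so is `1 + W (z + H₀)⁻¹`. Compactness of `W (z̄ + H₀)⁻¹` comes from the fact that
it is the adjoint of the compact extension of `(z + H₀)⁻¹ W`, and it carries over from `z̄` to `z`
by the resolvent identity `(z + H₀)⁻¹ = (z̄ + H₀)⁻¹ (1 + (z̄ - z) (z + H₀)⁻¹)`.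
-/

open ContinuousLinearMap ComplexConjugate
open scoped InnerProductSpace InnerProduct

section CompactAdjoint

variable {𝕜 E F : Type*} [RCLike 𝕜]
  [NormedAddCommGroup E] [InnerProductSpace 𝕜 E] [CompleteSpace E]
  [NormedAddCommGroup F] [InnerProductSpace 𝕜 F] [CompleteSpace F]

theorem norm_apply_sq_le_norm_adjoint_apply_mul (L : E →L[𝕜] F) (x : E) :
    ‖L x‖ ^ 2 ≤ ‖(L†) (L x)‖ * ‖x‖ := by
  rw [apply_norm_sq_eq_inner_adjoint_left]
  exact re_inner_le_norm _ _

theorem isCompactOperator_of_adjoint_comp_self {L : E →L[𝕜] F}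
    (hL : IsCompactOperator (L† ∘L L)) : IsCompactOperator L := by
  have hnet : TotallyBounded ((L† ∘L L) '' Metric.ball 0 1) :=
    (hL.isCompact_closure_image_ball (f := (L† ∘L L).toLinearMap) 1).totallyBounded.subset
      subset_closure
  refine (isCompactOperator_iff_isCompact_closure_image_ball L.toLinearMap one_pos).2
    ((TotallyBounded.closure (Metric.totallyBounded_iff.2 fun ε hε ↦ ?_)).isCompact_of_isClosed
      isClosed_closure)
  obtain ⟨t, ht_sub, ht_fin, hcover⟩ :=
    Metric.finite_approx_of_totallyBounded hnet (ε ^ 2 / 2) (by positivity)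
  obtain ⟨s, hs, hs_fin, rfl⟩ := Set.exists_subset_image_finite_and.1 ⟨t, ht_sub, ht_fin, rfl⟩
  refine ⟨L '' s, hs_fin.image L, ?_⟩
  rintro _ ⟨x, hx, rfl⟩
  obtain ⟨y, hy, hxy⟩ : ∃ y ∈ s, dist ((L† ∘L L) x) ((L† ∘L L) y) < ε ^ 2 / 2 := by
    simpa using hcover ⟨x, hx, rfl⟩
  have hdist : ‖x - y‖ ≤ 2 := by
    have hy' := hs hy
    rw [mem_ball_zero_iff] at hx hy'
    linarith [norm_sub_le x y]
  have hsq : ‖L (x - y)‖ ^ 2 < ε ^ 2 := calc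
    ‖L (x - y)‖ ^ 2 ≤ ‖(L†) (L (x - y))‖ * ‖x - y‖ := norm_apply_sq_le_norm_adjoint_apply_mul L _
    _ ≤ ‖(L†) (L (x - y))‖ * 2 := by gcongr
    _ < ε ^ 2 / 2 * 2 := by
      rw [dist_eq_norm, ← map_sub] at hxy
      gcongr
      exact hxy
    _ = ε ^ 2 := by ring
  refine Set.mem_biUnion (Set.mem_image_of_mem L hy) ?_
  rw [Metric.mem_ball, dist_eq_norm]
  simpa using lt_of_pow_lt_pow_left₀ 2 hε.le hsq

theorem isCompactOperator_adjoint {K : E →L[𝕜] F} (hK : IsCompactOperator K) :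
    IsCompactOperator (K†) :=
  isCompactOperator_of_adjoint_comp_self <| by
    rw [adjoint_adjoint]
    exact hK.comp_clm (K†)

end CompactAdjoint

section Perturbation

variable {𝕜 E : Type*} [Ring 𝕜] [AddCommGroup E] [Module 𝕜 E]

/-- The operator sum `T + W` of a partially defined operator `T` and a linear map `W` given on its
domain. The sum of `LinearPMap`s is not used, as its domain `T.domain ⊓ T.domain` agrees with
`T.domain` only propositionally. -/
def perturb (T : E →ₗ.[𝕜] E) (W : T.domain →ₗ[𝕜] E) : E →ₗ.[𝕜] E where
  domain := T.domain
  toFun := T.toFun + W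

theorem perturb_apply (T : E →ₗ.[𝕜] E) (W : T.domain →ₗ[𝕜] E) (u : T.domain) :
    perturb T W u = T u + W u :=
  rfl

end Perturbation

section Fredholm

variable {𝕜 E : Type*} [NontriviallyNormedField 𝕜] [NormedAddCommGroup E] [NormedSpace 𝕜 E]
  [CompleteSpace E]

theorem exists_add_apply_eq_of_isCompactOperator {L : E →L[𝕜] E} (hL : IsCompactOperator L)
    (hinj : ∀ x, x + L x = 0 → x = 0) (y : E) : ∃ x, x + L x = y := by
  have hneg : ¬ Module.End.HasEigenvalue (L : Module.End 𝕜 E) (-1) := fun h ↦ by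
    obtain ⟨x, hx⟩ := h.exists_hasEigenvector
    have hLx : L x = -x := by simpa using hx.apply_eq_smul
    exact hx.2 (hinj x (by rw [hLx, add_neg_cancel]))
  have hmem : (-1 : 𝕜) ∈ resolventSet 𝕜 L :=
    (hL.hasEigenvalue_or_mem_resolventSet (neg_ne_zero.2 one_ne_zero)).resolve_left hneg
  rw [spectrum.mem_resolventSet_iff, isUnit_iff_bijective] at hmem
  obtain ⟨x, hx⟩ := hmem.2 (-y)
  refine ⟨x, neg_injective ?_⟩
  rw [← hx]
  simp [sub_eq_add_neg, add_comm]

theorem exists_smul_add_perturb_eq {T : E →ₗ.[𝕜] E} {W : T.domain →ₗ[𝕜] E} {z : 𝕜}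
    {R : E → T.domain} (hR : ∀ v, z • (R v : E) + T (R v) = v)
    {L : E →L[𝕜] E} (hL : IsCompactOperator L) (hLW : ∀ v, L v = W (R v))
    (hinj : ∀ u : T.domain, z • (u : E) + perturb T W u = 0 → u = 0) (w : E) :
    ∃ u : T.domain, z • (u : E) + perturb T W u = w := by
  have hfactor (v : E) : z • (R v : E) + perturb T W (R v) = v + L v := by
    rw [perturb_apply, ← add_assoc, hR, hLW]
  obtain ⟨v, hv⟩ := exists_add_apply_eq_of_isCompactOperator hL (fun v hv ↦ by
    have hRv : R v = 0 := hinj (R v) ((hfactor v).trans hv)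
    rw [← hR v, hRv, LinearPMap.map_zero, ZeroMemClass.coe_zero, smul_zero, add_zero]) w
  exact ⟨R v, (hfactor v).trans hv⟩

end Fredholm

section SelfAdjoint

variable {𝕜 E : Type*} [RCLike 𝕜] [NormedAddCommGroup E] [InnerProductSpace 𝕜 E]
  {T : E →ₗ.[𝕜] E}

theorem perturb_isFormalAdjoint (hT : T.IsFormalAdjoint T) {W : T.domain →ₗ[𝕜] E}
    (hW : ∀ u v : T.domain, ⟪W u, (v : E)⟫_𝕜 = ⟪(u : E), W v⟫_𝕜) :
    (perturb T W).IsFormalAdjoint (perturb T W) := fun (u v : T.domain) ↦ by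
  rw [perturb_apply, perturb_apply, inner_add_left, inner_add_right, hT, hW]

variable [CompleteSpace E]

theorem isFormalAdjoint_self_of_isSelfAdjoint (hT : IsSelfAdjoint T) : T.IsFormalAdjoint T := by
  have h := LinearPMap.adjoint_isFormalAdjoint hT.dense_domain
  rwa [LinearPMap.isSelfAdjoint_def.1 hT] at h

theorem isSelfAdjoint_of_forall_exists_smul_add_eq (hdense : Dense (T.domain : Set E))
    (hT : T.IsFormalAdjoint T) {z : 𝕜}
    (hz : ∀ w, ∃ u : T.domain, z • (u : E) + T u = w)
    (hz' : ∀ w, ∃ u : T.domain, conj z • (u : E) + T u = w) : IsSelfAdjoint T := by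
  have hle : T ≤ T.adjoint := hT.le_adjoint hdense
  refine (LinearPMap.eq_of_le_of_domain_eq hle (le_antisymm hle.1 fun y hy ↦ ?_)).symm
  obtain ⟨u, hu⟩ := hz (z • y + T.adjoint ⟨y, hy⟩)
  obtain ⟨x, hx⟩ := hz' (y - u)
  have hadj : ⟪T.adjoint ⟨y, hy⟩, (x : E)⟫_𝕜 = ⟪y, T x⟫_𝕜 :=
    LinearPMap.adjoint_isFormalAdjoint hdense ⟨y, hy⟩ x
  have horth : ⟪y - u, y - u⟫_𝕜 = 0 := calc
    ⟪y - u, y - u⟫_𝕜 = ⟪y - u, conj z • (x : E) + T x⟫_𝕜 := by rw [hx]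
    _ = ⟪z • y + T.adjoint ⟨y, hy⟩ - (z • (u : E) + T u), (x : E)⟫_𝕜 := by
      simp only [inner_add_right, inner_sub_left, inner_add_left, inner_smul_left,
        inner_smul_right, hadj, hT u x]
      ring
    _ = 0 := by rw [hu, sub_self, inner_zero_left]
  rw [sub_eq_zero.1 (inner_self_eq_zero.1 horth)]
  exact u.2

theorem exists_conj_smul_add_adjoint_leftInverse (hT : IsSelfAdjoint T) {z : 𝕜} {R : E →L[𝕜] E}
    (hR : ∀ u : T.domain, R (z • (u : E) + T u) = u) (v : E) :
    ∃ hv : (R†) v ∈ T.domain, conj z • (R†) v + T ⟨(R†) v, hv⟩ = v := by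
  have hinner (u : T.domain) : ⟪v - conj z • (R†) v, (u : E)⟫_𝕜 = ⟪(R†) v, T u⟫_𝕜 := by
    have h : ⟪(R†) v, z • (u : E) + T u⟫_𝕜 = ⟪v, (u : E)⟫_𝕜 := by rw [adjoint_inner_left, hR]
    rw [inner_add_right, inner_smul_right] at h
    rw [inner_sub_left, inner_smul_left, RCLike.conj_conj, ← h, add_sub_cancel_left]
  have hdom : (R†) v ∈ T.adjoint.domain :=
    LinearPMap.mem_adjoint_domain_of_exists _ ⟨_, hinner⟩
  have happly : T.adjoint ⟨_, hdom⟩ = v - conj z • (R†) v :=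
    LinearPMap.adjoint_apply_eq hT.dense_domain _ hinner
  rw [← LinearPMap.isSelfAdjoint_def.1 hT]
  exact ⟨hdom, by rw [happly, add_sub_cancel]⟩

theorem adjoint_apply_eq_of_forall_apply_eq_comp {D : Submodule 𝕜 E} (hD : Dense (D : Set E))
    {W : D →ₗ[𝕜] E} (hW : ∀ u v : D, ⟪W u, (v : E)⟫_𝕜 = ⟪(u : E), W v⟫_𝕜)
    {R K : E →L[𝕜] E} (hK : ∀ u : D, K u = R (W u)) {v : E} (hv : (R†) v ∈ D) :
    (K†) v = W ⟨(R†) v, hv⟩ :=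
  hD.eq_of_inner_right 𝕜 fun u hu ↦ calc
    ⟪u, (K†) v⟫_𝕜 = ⟪R (W ⟨u, hu⟩), v⟫_𝕜 := by rw [adjoint_inner_right, hK ⟨u, hu⟩]
    _ = ⟪W ⟨u, hu⟩, (R†) v⟫_𝕜 := (adjoint_inner_right R _ _).symm
    _ = ⟪u, W ⟨(R†) v, hv⟩⟫_𝕜 := hW ⟨u, hu⟩ ⟨(R†) v, hv⟩

end SelfAdjoint

section Nonreal

variable {E : Type*} [NormedAddCommGroup E] [InnerProductSpace ℂ E] {T : E →ₗ.[ℂ] E} {z : ℂ}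

theorem eq_zero_of_smul_add_apply_eq_zero (hT : T.IsFormalAdjoint T) (hz : z.im ≠ 0)
    {u : T.domain} (hu : z • (u : E) + T u = 0) : u = 0 := by
  have hTu : T u = -(z • (u : E)) := eq_neg_of_add_eq_zero_right hu
  have hsymm : conj z * ⟪(u : E), u⟫ = z * ⟪(u : E), u⟫ := by
    simpa [hTu, inner_neg_left, inner_neg_right, inner_smul_left, inner_smul_right] using hT u u
  have hne : conj z ≠ z := fun h ↦ hz (Complex.conj_eq_iff_im.1 h)
  exact Subtype.ext (inner_self_eq_zero.1 ((mul_eq_mul_right_iff.1 hsymm).resolve_left hne))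

variable [CompleteSpace E]

theorem adjoint_leftInverse_conj_smul_add (hT : IsSelfAdjoint T) (hz : z.im ≠ 0) {R : E →L[ℂ] E}
    (hR : ∀ u : T.domain, R (z • (u : E) + T u) = u) (u : T.domain) :
    (R†) (conj z • (u : E) + T u) = u := by
  obtain ⟨hmem, hright⟩ := exists_conj_smul_add_adjoint_leftInverse hT hR (conj z • (u : E) + T u)
  have hdiff : conj z • ((⟨_, hmem⟩ - u : T.domain) : E) + T (⟨_, hmem⟩ - u) = 0 := by
    rw [LinearPMap.map_sub, Submodule.coe_sub, smul_sub, sub_add_sub_comm, hright, sub_self]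
  exact congrArg Subtype.val (sub_eq_zero.1 (eq_zero_of_smul_add_apply_eq_zero
    (isFormalAdjoint_self_of_isSelfAdjoint hT) (by simpa using hz) hdiff))

theorem exists_smul_add_leftInverse (hT : IsSelfAdjoint T) (hz : z.im ≠ 0) {R : E →L[ℂ] E}
    (hR : ∀ u : T.domain, R (z • (u : E) + T u) = u) (v : E) :
    ∃ hv : R v ∈ T.domain, z • R v + T ⟨R v, hv⟩ = v := by
  simpa only [adjoint_adjoint, Complex.conj_conj] using
    exists_conj_smul_add_adjoint_leftInverse hT (adjoint_leftInverse_conj_smul_add hT hz hR) v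

theorem adjoint_leftInverse_add_smul (hT : IsSelfAdjoint T) (hz : z.im ≠ 0) {R : E →L[ℂ] E}
    (hR : ∀ u : T.domain, R (z • (u : E) + T u) = u) (v : E) :
    (R†) (v + (conj z - z) • R v) = R v := by
  obtain ⟨hmem, hright⟩ := exists_smul_add_leftInverse hT hz hR v
  have hshift : v + (conj z - z) • R v = conj z • R v + T ⟨R v, hmem⟩ := by
    linear_combination (norm := module) -hright
  rw [hshift]
  exact adjoint_leftInverse_conj_smul_add hT hz hR ⟨R v, hmem⟩

theorem selfAdjoint_add_relatively_compact_perturbation_general (hT : IsSelfAdjoint T)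
    (hz : z.im ≠ 0) {R : E →L[ℂ] E} (hR : ∀ u : T.domain, R (z • (u : E) + T u) = u)
    {W : T.domain →ₗ[ℂ] E} (hW : ∀ u v : T.domain, ⟪W u, (v : E)⟫ = ⟪(u : E), W v⟫)
    {K : E →L[ℂ] E} (hK : IsCompactOperator K) (hKW : ∀ u : T.domain, K u = R (W u)) :
    IsSelfAdjoint (perturb T W) := by
  have hsymm : (perturb T W).IsFormalAdjoint (perturb T W) :=
    perturb_isFormalAdjoint (isFormalAdjoint_self_of_isSelfAdjoint hT) hW
  have hz' : (conj z).im ≠ 0 := by simpa using hz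
  choose hmem hright using exists_smul_add_leftInverse hT hz hR
  choose hmem' hright' using exists_conj_smul_add_adjoint_leftInverse hT hR
  have hadj (v : E) : (K†) v = W ⟨(R†) v, hmem' v⟩ :=
    adjoint_apply_eq_of_forall_apply_eq_comp hT.dense_domain hW hKW (hmem' v)
  have hcompact' : IsCompactOperator (K†) := isCompactOperator_adjoint hK
  let L : E →L[ℂ] E := (K†) ∘L (.id ℂ E + (conj z - z) • R)
  have hcompact : IsCompactOperator L := hcompact'.comp_clm _
  have hL (v : E) : L v = W ⟨R v, hmem v⟩ :=
    (hadj _).trans (congrArg W (Subtype.ext (adjoint_leftInverse_add_smul hT hz hR v)))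
  exact isSelfAdjoint_of_forall_exists_smul_add_eq hT.dense_domain hsymm
    (exists_smul_add_perturb_eq hright hcompact hL
      fun _ ↦ eq_zero_of_smul_add_apply_eq_zero hsymm hz)
    (exists_smul_add_perturb_eq hright' hcompact' hadj
      fun _ ↦ eq_zero_of_smul_add_apply_eq_zero hsymm hz')

end Nonreal

/-- If `H₀` is self-adjoint with dense domain `D`, with bounded resolvents
`R₊ = (i + H₀)⁻¹` and `R₋ = (i − H₀)⁻¹`, and `W : D → 𝓗` is symmetric with
`(i ± H₀)⁻¹ W` extending to compact operators on `𝓗`, then `H₀ + W` with domain `D`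
is self-adjoint. -/
theorem selfAdjoint_add_relatively_compact_perturbation
    {𝓗 : Type*} [NormedAddCommGroup 𝓗] [InnerProductSpace ℂ 𝓗] [CompleteSpace 𝓗]
    (H₀ : 𝓗 →ₗ.[ℂ] 𝓗) (hdense : Dense (H₀.domain : Set 𝓗))
    (hH₀ : IsSelfAdjoint H₀)
    (Rp Rm : 𝓗 →L[ℂ] 𝓗)
    (hRp : ∀ u : H₀.domain, Rp (Complex.I • (u : 𝓗) + H₀ u) = u)
    (hRp' : ∀ v : 𝓗, ∃ hv : Rp v ∈ H₀.domain,
      Complex.I • (Rp v) + H₀ ⟨Rp v, hv⟩ = v)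
    (hRm : ∀ u : H₀.domain, Rm (Complex.I • (u : 𝓗) - H₀ u) = u)
    (hRm' : ∀ v : 𝓗, ∃ hv : Rm v ∈ H₀.domain,
      Complex.I • (Rm v) - H₀ ⟨Rm v, hv⟩ = v)
    (W : H₀.domain →ₗ[ℂ] 𝓗)
    (hW : ∀ u v : H₀.domain, ⟪W u, (v : 𝓗)⟫ = ⟪(u : 𝓗), W v⟫)
    (Kp Km : 𝓗 →L[ℂ] 𝓗)
    (hKp : IsCompactOperator (⇑Kp)) (hKm : IsCompactOperator (⇑Km))
    (hKp' : ∀ u : H₀.domain, Kp (u : 𝓗) = Rp (W u))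
    (hKm' : ∀ u : H₀.domain, Km (u : 𝓗) = Rm (W u)) :
    IsSelfAdjoint ({ domain := H₀.domain, toFun := H₀.toFun + W } : 𝓗 →ₗ.[ℂ] 𝓗) :=
  selfAdjoint_add_relatively_compact_perturbation_general hH₀ (by simp) hRp hW hKp hKp'
end
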